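/- arXiv:1402.5455 — 10 statements merged into one kernel-verified Lean document; each statement's English description precedes it below -/
import Mathlib

section
/- For every real number a > 0 and every φ ∈ ℝ, the point (a·cos φ, (1/a)·sin φ) ∈ ℝ² equals √(C(φ)) · (cos Φ(φ), sin Φ(φ)); that is, the curve φ ↦ (a·cos φ, (1/a)·sin φ) has radial coordinate √(C(φ)) and continuous angular coordinate Φ(φ). -/
/-!
Put `x = a cos φ`, `y = (1/a) sin φ` and `r = √C`, so `x² + y² = C` and the Wronskian
`x y' - y x'` is identically `1`. Hence the unit vector `(X, Y) = (x/r, y/r)` satisfies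
`X' = -Y/C`, `Y' = X/C`, the same linear system as `(cos Φ, sin Φ)`, because `Φ' = 1/C`.
The squared distance between these two solutions has zero derivative and vanishes at `0`,
so the solutions coincide.
-/

/-- For every real number `a > 0` and every `φ ∈ ℝ`, the point
`(a·cos φ, (1/a)·sin φ) ∈ ℝ²` equals `√(C(φ)) · (cos Φ(φ), sin Φ(φ))`, where
`C(φ) = a²cos²φ + (1/a²)sin²φ` and `Φ(φ) = ∫₀^φ dt / C(t)`. -/
theorem stmt_0 (a : ℝ) (ha : 0 < a)
    (C Φ : ℝ → ℝ)
    (hC : ∀ φ : ℝ, C φ = a ^ 2 * Real.cos φ ^ 2 + (1 / a ^ 2) * Real.sin φ ^ 2)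
    (hΦ : ∀ φ : ℝ, Φ φ = ∫ t in (0:ℝ)..φ, 1 / C t) :
    ∀ φ : ℝ,
      (a * Real.cos φ, (1 / a) * Real.sin φ) =
        (Real.sqrt (C φ) * Real.cos (Φ φ), Real.sqrt (C φ) * Real.sin (Φ φ)) := by
  have ha0 : a ≠ 0 := ha.ne'
  obtain ⟨b, hb⟩ : ∃ b, b = 1 / a := ⟨_, rfl⟩
  have hab : a * b = 1 := by rw [hb]; field_simp
  have hb0 : b ≠ 0 := right_ne_zero_of_mul_eq_one hab
  have hC' : ∀ t, C t = (a * Real.cos t) ^ 2 + (b * Real.sin t) ^ 2 := by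
    intro t; rw [hC, hb]; field_simp
  have hpos : ∀ t, 0 < C t := by
    intro t
    rw [hC']
    by_cases h : Real.cos t = 0
    · have hs : Real.sin t ≠ 0 := by
        intro hs
        have := Real.sin_sq_add_cos_sq t
        simp [h, hs] at this
      positivity
    · positivity
  have hCcont : Continuous C := by
    rw [funext hC']; fun_prop
  have hΦd : ∀ t, HasDerivAt Φ (1 / C t) t := by
    intro t
    have hcont : Continuous fun t => 1 / C t :=
      continuous_const.div hCcont fun t => (hpos t).ne'
    rw [funext hΦ]
    exact intervalIntegral.integral_hasDerivAt_right (hcont.intervalIntegrable _ _)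
      (hcont.stronglyMeasurableAtFilter _ _) hcont.continuousAt
  have hx : ∀ t, HasDerivAt (fun t => a * Real.cos t) (a * -Real.sin t) t :=
    fun t => (Real.hasDerivAt_cos t).const_mul a
  have hy : ∀ t, HasDerivAt (fun t => b * Real.sin t) (b * Real.cos t) t :=
    fun t => (Real.hasDerivAt_sin t).const_mul b
  have hr : ∀ t, HasDerivAt (fun t => √(C t))
      ((b ^ 2 - a ^ 2) * Real.sin t * Real.cos t / √(C t)) t := by
    intro t
    have h : HasDerivAt C (2 * ((b ^ 2 - a ^ 2) * Real.sin t * Real.cos t)) t := by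
      rw [funext hC']
      refine (((hx t).fun_pow 2).add ((hy t).fun_pow 2)).congr_deriv ?_
      push_cast; ring
    refine (h.sqrt (hpos t).ne').congr_deriv ?_
    have := (Real.sqrt_pos.2 (hpos t)).ne'
    field_simp
  have hX : ∀ t, HasDerivAt (fun t => a * Real.cos t / √(C t))
      (-(b * Real.sin t / √(C t)) / C t) t := by
    intro t
    have h0 := (Real.sqrt_pos.2 (hpos t)).ne'
    have hsq : √(C t) ^ 2 = C t := Real.sq_sqrt (hpos t).le
    refine ((hx t).div (hr t) h0).congr_deriv ?_
    have hCt := hC' t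
    rw [← hsq] at hCt ⊢
    rw [Real.sqrt_sq (Real.sqrt_nonneg _)]
    generalize √(C t) = r at *
    have h1 := Real.sin_sq_add_cos_sq t
    field_simp
    rw [hCt]
    linear_combination
      (-b * Real.sin t) * h1 + (-b * Real.sin t * (Real.cos t ^ 2 + Real.sin t ^ 2)) * hab
  have hY : ∀ t, HasDerivAt (fun t => b * Real.sin t / √(C t))
      ((a * Real.cos t / √(C t)) / C t) t := by
    intro t
    have h0 := (Real.sqrt_pos.2 (hpos t)).ne'
    have hsq : √(C t) ^ 2 = C t := Real.sq_sqrt (hpos t).le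
    refine ((hy t).div (hr t) h0).congr_deriv ?_
    have hCt := hC' t
    rw [← hsq] at hCt ⊢
    rw [Real.sqrt_sq (Real.sqrt_nonneg _)]
    generalize √(C t) = r at *
    have h1 := Real.sin_sq_add_cos_sq t
    field_simp
    rw [hCt]
    linear_combination (a * Real.cos t) * h1 +
      (a * Real.cos t * (Real.cos t ^ 2 + Real.sin t ^ 2)) * hab
  have hD : ∀ t, HasDerivAt (fun t => (a * Real.cos t / √(C t) - Real.cos (Φ t)) ^ 2 +
      (b * Real.sin t / √(C t) - Real.sin (Φ t)) ^ 2) 0 t := by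
    intro t
    refine ((((hX t).fun_sub (hΦd t).cos).fun_pow 2).add
      (((hY t).fun_sub (hΦd t).sin).fun_pow 2)).congr_deriv ?_
    push_cast; ring
  intro φ
  have hconst := is_const_of_deriv_eq_zero (fun t => (hD t).differentiableAt)
    (fun t => (hD t).deriv) φ 0
  have hΦ0 : Φ 0 = 0 := by rw [hΦ]; simp
  have hr0 : √(C 0) = a := by
    rw [hC']; simp [Real.sqrt_sq ha.le]
  simp only [hΦ0, hr0, Real.cos_zero, Real.sin_zero, mul_one, mul_zero, zero_div, sub_self,
    div_self ha0] at hconst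
  have h0 := (Real.sqrt_pos.2 (hpos φ)).ne'
  have e1 : a * Real.cos φ / √(C φ) - Real.cos (Φ φ) = 0 := by
    nlinarith [sq_nonneg (b * Real.sin φ / √(C φ) - Real.sin (Φ φ)),
      sq_nonneg (a * Real.cos φ / √(C φ) - Real.cos (Φ φ))]
  have e2 : b * Real.sin φ / √(C φ) - Real.sin (Φ φ) = 0 := by
    rw [e1] at hconst; simpa using hconst
  rw [← hb, ← sub_eq_zero.1 e1, ← sub_eq_zero.1 e2, mul_div_cancel₀ _ h0, mul_div_cancel₀ _ h0]
end

section
/- For every a > 0: if γ > 1 then x_w(s) tends to −∞ as s → 0⁺, and if 0 < γ < 1 then x_w(s) tends to +∞ as s → 0⁺. -/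
/-!
Put `b = 1 / a`. The integrand `1 / C` is the derivative of the argument of the point
`a cos φ + i b sin φ`, and multiplying that point by `e^{-iφ}` gives `D + i N` with
`D = a cos² φ + b sin² φ > 0` and `N = (b - a) sin φ cos φ`. Hence
`Φ(φ) = φ + arctan (N / D)` exactly (`integral_one_div_eq`), so `Φ(φ) - φ` is bounded by `π / 2`.
Also `1 / M ≤ C ≤ M` for `M = a² + b²`, so `log C` is bounded (`abs_log_le`). Since
`-g_w δ_v = γ g_v`, this gives `x_w(s) = (γ - 1) g_v log s + O(1)`, and the sign of `γ - 1`
decides the limit because `log s → -∞` as `s → 0⁺`.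
-/

/-- With `D = a cos² + b sin²` and `N = (b - a) sin cos`, the function `x + arctan (N / D)` is an
antiderivative of `1 / C`; this uses `N² + D² = C` and `C + N' D - N D' = 1`. -/
lemma hasDerivAt_add_arctan {a b : ℝ} (ha : 0 < a) (hb : 0 < b) (hab : a * b = 1) (x : ℝ) :
    HasDerivAt (fun x : ℝ => x + Real.arctan ((b - a) * (Real.sin x * Real.cos x) /
        (a * Real.cos x ^ 2 + b * Real.sin x ^ 2)))
      (1 / (a ^ 2 * Real.cos x ^ 2 + b ^ 2 * Real.sin x ^ 2)) x := by
  have hs := Real.hasDerivAt_sin x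
  have hc := Real.hasDerivAt_cos x
  have hsc := Real.sin_sq_add_cos_sq x
  have hD : 0 < a * Real.cos x ^ 2 + b * Real.sin x ^ 2 := by
    rcases eq_or_ne (Real.sin x) 0 with h | h
    · have : Real.cos x ^ 2 = 1 := by rw [h] at hsc; linarith
      rw [this, h]; linarith
    · positivity
  have hN := (hs.mul hc).const_mul (b - a)
  have hD' := ((hc.pow 2).const_mul a).add ((hs.pow 2).const_mul b)
  have key := (hasDerivAt_id x).add ((hN.div hD' hD.ne').arctan)
  refine key.congr_deriv ?_
  simp only [Pi.mul_apply, Pi.add_apply, Pi.pow_apply, Pi.div_apply]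
  generalize Real.sin x = s at *
  generalize Real.cos x = c at *
  have hND : ((b - a) * (s * c)) ^ 2 + (a * c ^ 2 + b * s ^ 2) ^ 2
      = a ^ 2 * c ^ 2 + b ^ 2 * s ^ 2 := by
    linear_combination (a ^ 2 * c ^ 2 + b ^ 2 * s ^ 2) * hsc
  have hC : 0 < a ^ 2 * c ^ 2 + b ^ 2 * s ^ 2 := by rw [← hND]; positivity
  have h1 : 1 + ((b - a) * (s * c) / (a * c ^ 2 + b * s ^ 2)) ^ 2
      = (a ^ 2 * c ^ 2 + b ^ 2 * s ^ 2) / (a * c ^ 2 + b * s ^ 2) ^ 2 := by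
    rw [← hND]; field_simp; ring
  rw [h1]
  generalize hDD : a * c ^ 2 + b * s ^ 2 = D at *
  generalize hCC : a ^ 2 * c ^ 2 + b ^ 2 * s ^ 2 = E at *
  field_simp
  subst hDD hCC
  push_cast
  linear_combination ((b - a) * (a * c ^ 2 - b * s ^ 2) + a * b) * hsc + hab

lemma integral_one_div_eq {a b : ℝ} (ha : 0 < a) (hb : 0 < b) (hab : a * b = 1) (x : ℝ)
    (hpos : ∀ t : ℝ, 0 < a ^ 2 * Real.cos t ^ 2 + b ^ 2 * Real.sin t ^ 2) :
    ∫ t in (0:ℝ)..x, 1 / (a ^ 2 * Real.cos t ^ 2 + b ^ 2 * Real.sin t ^ 2) =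
      x + Real.arctan ((b - a) * (Real.sin x * Real.cos x) /
        (a * Real.cos x ^ 2 + b * Real.sin x ^ 2)) := by
  rw [intervalIntegral.integral_eq_sub_of_hasDerivAt
    (fun t _ => hasDerivAt_add_arctan ha hb hab t)]
  · simp
  · apply Continuous.intervalIntegrable
    exact continuous_const.div (by fun_prop) (fun t => (hpos t).ne')

lemma abs_log_le {y M : ℝ} (hy : 0 < y) (hyM : y ≤ M) (hM : 1 ≤ y * M) :
    |Real.log y| ≤ Real.log M := by
  have hMpos : 0 < M := hy.trans_le hyM
  have h1 := Real.log_le_log hy hyM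
  have h2 := Real.log_nonneg hM
  rw [Real.log_mul hy.ne' hMpos.ne'] at h2
  exact abs_le.2 ⟨by linarith, h1⟩

/-- For every `a > 0`: if `γ > 1` then `x_w(s)` tends to `−∞` as
`s → 0⁺`, and if `0 < γ < 1` then `x_w(s)` tends to `+∞` as `s → 0⁺`. -/
theorem stmt_5 (a Cv Ev αv Cw Ew αw ε : ℝ)
    (ha : 0 < a) (hCv : 0 < Cv) (hEv : 0 < Ev) (hαv : 0 < αv)
    (hCw : 0 < Cw) (hEw : 0 < Ew) (hαw : 0 < αw) (hε : 0 < ε)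
    (δv gv δw gw γ c₁ c₂ c₃ : ℝ)
    (hδv : δv = Cv / Ev) (hgv : gv = αv / Ev)
    (hδw : δw = Cw / Ew) (hgw : gw = -(αw / Ew))
    (hγ : γ = (αw * Cv) / (αv * Ew))
    (hc₁ : c₁ = ε ^ (1 - δv)) (hc₂ : c₂ = gv * Real.log ε)
    (hc₃ : c₃ = gw * Real.log ε)
    (C Φ : ℝ → ℝ)
    (hC : ∀ φ : ℝ, C φ = a ^ 2 * Real.cos φ ^ 2 + (1 / a ^ 2) * Real.sin φ ^ 2)
    (hΦ : ∀ φ : ℝ, Φ φ = ∫ t in (0:ℝ)..φ, 1 / C t)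
    (φ xw : ℝ → ℝ)
    (hφ : ∀ s : ℝ, φ s = -gv * Real.log s + c₂)
    (hxw : ∀ s : ℝ, xw s = -gw * δv * Real.log s - (gw / 2) * Real.log (C (φ s))
        + Φ (φ s) + c₃ - gw * Real.log c₁) :
    (1 < γ → Filter.Tendsto xw (nhdsWithin 0 (Set.Ioi 0)) Filter.atBot) ∧
    (0 < γ → γ < 1 → Filter.Tendsto xw (nhdsWithin 0 (Set.Ioi 0)) Filter.atTop) := by
  obtain ⟨b, hb⟩ : ∃ b, b = 1 / a := ⟨_, rfl⟩
  have hb0 : 0 < b := by rw [hb]; positivity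
  have hab : a * b = 1 := by rw [hb]; field_simp
  have hC' : ∀ t, C t = a ^ 2 * Real.cos t ^ 2 + b ^ 2 * Real.sin t ^ 2 := by
    intro t; rw [hC, hb]; ring
  have hmul : ∀ t, 1 ≤ C t * (a ^ 2 + b ^ 2) := by
    intro t
    have h : C t * (a ^ 2 + b ^ 2) =
        1 + (a ^ 4 * Real.cos t ^ 2 + b ^ 4 * Real.sin t ^ 2) := by
      rw [hC']
      linear_combination (a * b + 1) * (Real.cos t ^ 2 + Real.sin t ^ 2) * hab
        + Real.sin_sq_add_cos_sq t
    rw [h]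
    have : 0 ≤ a ^ 4 * Real.cos t ^ 2 + b ^ 4 * Real.sin t ^ 2 := by positivity
    linarith
  have hpos : ∀ t, 0 < C t := by
    intro t
    have hM : 0 < a ^ 2 + b ^ 2 := by positivity
    exact pos_of_mul_pos_left (lt_of_lt_of_le one_pos (hmul t)) hM.le
  have hlog : ∀ t, |Real.log (C t)| ≤ Real.log (a ^ 2 + b ^ 2) := by
    intro t
    refine abs_log_le (hpos t) ?_ (hmul t)
    rw [hC']
    nlinarith [Real.sin_sq_le_one t, Real.cos_sq_le_one t, sq_nonneg a, sq_nonneg b]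
  have hΦ' : ∀ t, |Φ t - t| ≤ Real.pi / 2 := by
    intro t
    rw [hΦ]
    simp only [hC']
    rw [integral_one_div_eq ha hb0 hab t (fun u => by rw [← hC']; exact hpos u),
      add_sub_cancel_left]
    exact abs_le.2 ⟨(Real.neg_pi_div_two_lt_arctan _).le, (Real.arctan_lt_pi_div_two _).le⟩
  have hgv0 : 0 < gv := by rw [hgv]; positivity
  have hrel : -gw * δv = γ * gv := by
    rw [hgw, hδv, hγ, hgv]; field_simp
  -- the remainder `x_w(s) - (γ - 1) g_v log s` is bounded uniformly in `s`
  obtain ⟨K, hK⟩ : ∃ K, ∀ s, |xw s - (γ - 1) * gv * Real.log s| ≤ K := by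
    refine ⟨|gw / 2| * Real.log (a ^ 2 + b ^ 2) + Real.pi / 2
      + |c₂ + c₃ - gw * Real.log c₁|, fun s => ?_⟩
    have e : xw s - (γ - 1) * gv * Real.log s = -((gw / 2) * Real.log (C (φ s)))
        + (Φ (φ s) - φ s) + (c₂ + c₃ - gw * Real.log c₁) := by
      rw [hxw, hrel]
      linear_combination hφ s
    rw [e]
    refine (abs_add_three _ _ _).trans ?_
    rw [abs_neg, abs_mul]
    gcongr
    · exact hlog _
    · exact hΦ' _
  have hlim := Real.tendsto_log_nhdsGT_zero
  constructor
  · intro h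
    have h0 : 0 < (γ - 1) * gv := mul_pos (by linarith) hgv0
    refine Filter.tendsto_atBot_mono (fun s => ?_)
      (Filter.tendsto_atBot_add_const_right _ K (hlim.const_mul_atBot h0))
    have := (abs_le.1 (hK s)).2
    linarith
  · intro _ h
    have h0 : (γ - 1) * gv < 0 := mul_neg_of_neg_of_pos (by linarith) hgv0
    refine Filter.tendsto_atTop_mono (fun s => ?_)
      (Filter.tendsto_atTop_add_const_right _ (-K) (hlim.const_mul_atBot_of_neg h0))
    have := (abs_le.1 (hK s)).1
    linarith
end

section
/- For every s₀ > 0 and every natural number n, x_w(s₀ · e^{−nπ/g_v}) = x_w(s₀) + nπ(1 − γ). -/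
/-!
Passing from `s₀` to `s₀ · e^{-nπ/g_v}` adds `nπ` to `φ`. The term `log C(φ)` is unchanged because
`C` is `π`-periodic, the term `-g_w δ_v log s` changes by `nπ g_w δ_v / g_v = -nπγ`, and `Φ`
increases by `nπ`. The last fact comes from a global antiderivative of `1 / C`: the angle of the
point `(a cos t, sin t / a)`, written as `t` plus the `π`-periodic angle
`arctan ((1 - a²) sin t cos t / (a² cos² t + sin² t))` between that point and `(cos t, sin t)`.
-/

/-- The continuous angle of `(a cos t, sin t / a)`, in the form `t` plus a `π`-periodic function,
is an antiderivative of `1 / C` on the whole line. -/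
lemma hasDerivAt_angle (a : ℝ) (ha : 0 < a) (t : ℝ) :
    HasDerivAt (fun t : ℝ => t + Real.arctan ((1 - a ^ 2) * (Real.sin t * Real.cos t) /
        (a ^ 2 * Real.cos t ^ 2 + Real.sin t ^ 2)))
      (1 / (a ^ 2 * Real.cos t ^ 2 + (1 / a ^ 2) * Real.sin t ^ 2)) t := by
  have hsc := Real.sin_sq_add_cos_sq t
  have hs := Real.hasDerivAt_sin t
  have hc := Real.hasDerivAt_cos t
  have hpos : ∀ b : ℝ, 0 < b → 0 < b * Real.cos t ^ 2 + Real.sin t ^ 2 := by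
    intro b hb
    rcases eq_or_ne (Real.cos t) 0 with h | h
    · rw [h] at hsc ⊢
      nlinarith
    · positivity
  have hD := hpos (a ^ 2) (by positivity)
  have hE := hpos (a ^ 4) (by positivity)
  have key := (hasDerivAt_id t).add
    ((((hs.mul hc).const_mul (1 - a ^ 2)).div
      (((hc.pow 2).const_mul (a ^ 2)).add (hs.pow 2)) hD.ne').arctan)
  refine key.congr_deriv ?_
  simp only [Pi.mul_apply, Pi.add_apply, Pi.pow_apply, Pi.div_apply]
  generalize Real.sin t = s at *
  generalize Real.cos t = c at *
  have hCe : a ^ 2 * c ^ 2 + 1 / a ^ 2 * s ^ 2 = (a ^ 4 * c ^ 2 + s ^ 2) / a ^ 2 := by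
    field_simp
  have hq : 1 + ((1 - a ^ 2) * (s * c) / (a ^ 2 * c ^ 2 + s ^ 2)) ^ 2
      = (a ^ 4 * c ^ 2 + s ^ 2) / (a ^ 2 * c ^ 2 + s ^ 2) ^ 2 := by
    field_simp
    linear_combination (a ^ 4 * c ^ 2 + s ^ 2) * hsc
  rw [hCe, hq]
  field_simp
  push_cast
  linear_combination ((1 - a ^ 2) * (a ^ 2 * c ^ 2 - s ^ 2) + a ^ 2) * hsc

/-- For every `s₀ > 0` and every natural number `n`,
`x_w(s₀ · e^{−nπ/g_v}) = x_w(s₀) + nπ(1 − γ)`. -/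
theorem stmt_6 (a Cv Ev αv Cw Ew αw ε : ℝ)
    (ha : 0 < a) (hCv : 0 < Cv) (hEv : 0 < Ev) (hαv : 0 < αv)
    (hCw : 0 < Cw) (hEw : 0 < Ew) (hαw : 0 < αw) (hε : 0 < ε)
    (δv gv δw gw γ c₁ c₂ c₃ : ℝ)
    (hδv : δv = Cv / Ev) (hgv : gv = αv / Ev)
    (hδw : δw = Cw / Ew) (hgw : gw = -(αw / Ew))
    (hγ : γ = (αw * Cv) / (αv * Ew))
    (hc₁ : c₁ = ε ^ (1 - δv)) (hc₂ : c₂ = gv * Real.log ε)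
    (hc₃ : c₃ = gw * Real.log ε)
    (C Φ : ℝ → ℝ)
    (hC : ∀ φ : ℝ, C φ = a ^ 2 * Real.cos φ ^ 2 + (1 / a ^ 2) * Real.sin φ ^ 2)
    (hΦ : ∀ φ : ℝ, Φ φ = ∫ t in (0:ℝ)..φ, 1 / C t)
    (φ xw : ℝ → ℝ)
    (hφ : ∀ s : ℝ, φ s = -gv * Real.log s + c₂)
    (hxw : ∀ s : ℝ, xw s = -gw * δv * Real.log s - (gw / 2) * Real.log (C (φ s))
        + Φ (φ s) + c₃ - gw * Real.log c₁) :
    ∀ s₀ : ℝ, 0 < s₀ → ∀ n : ℕ,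
      xw (s₀ * Real.exp (-(n * Real.pi) / gv)) = xw s₀ + n * Real.pi * (1 - γ) := by
  intro s₀ hs₀ n
  have hgv0 : gv ≠ 0 := by rw [hgv]; positivity
  have hlog : Real.log (s₀ * Real.exp (-(n * Real.pi) / gv))
      = Real.log s₀ - n * Real.pi / gv := by
    rw [Real.log_mul hs₀.ne' (Real.exp_pos _).ne', Real.log_exp]
    ring
  have hφ' : φ (s₀ * Real.exp (-(n * Real.pi) / gv)) = φ s₀ + n * Real.pi := by
    rw [hφ, hφ, hlog]
    field_simp
    ring
  have hsign : ((-1 : ℝ) ^ n) ^ 2 = 1 := by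
    rw [← pow_mul, mul_comm, pow_mul]
    norm_num
  have hper : ∀ x, C (x + n * Real.pi) = C x := by
    intro x
    rw [hC, hC, Real.cos_add_nat_mul_pi, Real.sin_add_nat_mul_pi, mul_pow, mul_pow, hsign]
    ring
  have hCcont : Continuous C := by
    rw [funext hC]
    fun_prop
  have hCpos : ∀ x, C x ≠ 0 := by
    intro x
    rw [hC]
    rcases eq_or_ne (Real.cos x) 0 with h | h
    · have hsc := Real.sin_sq_add_cos_sq x
      have hsin : Real.sin x ≠ 0 := by
        intro h'
        simp [h, h'] at hsc
      positivity
    · positivity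
  have hΦ' : ∀ x, Φ (x + n * Real.pi) = Φ x + n * Real.pi := by
    intro x
    have hF : ∀ y, Φ y = y + Real.arctan ((1 - a ^ 2) * (Real.sin y * Real.cos y) /
        (a ^ 2 * Real.cos y ^ 2 + Real.sin y ^ 2)) := by
      intro y
      have hcont : Continuous fun t => 1 / C t := continuous_const.div hCcont hCpos
      rw [hΦ, intervalIntegral.integral_eq_sub_of_hasDerivAt
        (fun t _ => by rw [hC]; exact hasDerivAt_angle a ha t)
        (hcont.intervalIntegrable _ _)]
      simp
    have hmul : (-1 : ℝ) ^ n * Real.sin x * ((-1) ^ n * Real.cos x)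
        = Real.sin x * Real.cos x := by
      linear_combination Real.sin x * Real.cos x * hsign
    rw [hF, hF, Real.cos_add_nat_mul_pi, Real.sin_add_nat_mul_pi, hmul, mul_pow, mul_pow, hsign]
    ring_nf
  have hγ' : gw * δv / gv = -γ := by
    rw [hgw, hδv, hgv, hγ]
    field_simp
  rw [hxw, hxw, hφ', hper, hΦ', hlog]
  linear_combination n * Real.pi * hγ'
end

section
/- If γ = (α_w C_v)/(α_v E_w) is irrational, then for every s₀ > 0 the set of values x_w(s₀ · e^{−nπ/g_v}), as n ranges over the natural numbers, is dense modulo 2π; that is, its image in the circle ℝ/2πℤ is dense. -/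
/-!
Along the sequence `sₙ = s₀ e^{-nπ/g_v}` the angle advances by exactly `π` per step:
`φ(sₙ) = φ(s₀) + nπ`. As `C` is `π`-periodic, its logarithm does not change, and
`Φ(φ + nπ) = Φ(φ) + nπ`, because `∫₀^π dt / C(t) = π` for every `a`. Hence
`x_w(sₙ) = x_w(s₀) + n π (1 - γ)`, and the claim is the density of the forward orbit of an
irrational rotation of the circle.

The value of `Φ` comes from a closed form valid on the whole real line
(`integral_one_div_quadratic`), from which the shift by `nπ` can be read off.
-/

/-- A global primitive of `1 / C`. On `(-π/2, π/2)` it is `arctan (k tan x)` with `k = a⁻²`;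
subtracting `x` by the addition formula for `tan` gives an expression without poles. -/
theorem integral_one_div_quadratic {a : ℝ} (ha : 0 < a) (x : ℝ) :
    ∫ t in (0:ℝ)..x, 1 / (a ^ 2 * Real.cos t ^ 2 + (1 / a ^ 2) * Real.sin t ^ 2) =
      x + Real.arctan ((1 / a ^ 2 - 1) * (Real.sin x * Real.cos x) /
        (Real.cos x ^ 2 + 1 / a ^ 2 * Real.sin x ^ 2)) := by
  have hpos : ∀ p q : ℝ, 0 < p → 0 < q → ∀ t : ℝ,
      0 < p * Real.cos t ^ 2 + q * Real.sin t ^ 2 := by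
    intro p q hp hq t
    rcases eq_or_ne (Real.sin t) 0 with h | h
    · have h1 := Real.sin_sq_add_cos_sq t
      have h2 : Real.cos t ^ 2 = 1 := by rw [h] at h1; linarith
      rw [h, h2]; simpa using hp
    · have := mul_nonneg hp.le (sq_nonneg (Real.cos t))
      have := mul_pos hq (pow_pos (abs_pos.mpr h) 2)
      rw [sq_abs] at this
      linarith
  have hk : 0 < 1 / a ^ 2 := by positivity
  have hcont : Continuous fun t : ℝ =>
      1 / (a ^ 2 * Real.cos t ^ 2 + (1 / a ^ 2) * Real.sin t ^ 2) :=
    continuous_const.div (by fun_prop) fun t => (hpos _ _ (by positivity) hk t).ne'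
  have hderiv : ∀ t : ℝ, HasDerivAt
      (fun x : ℝ => x + Real.arctan ((1 / a ^ 2 - 1) * (Real.sin x * Real.cos x) /
        (Real.cos x ^ 2 + 1 / a ^ 2 * Real.sin x ^ 2)))
      (1 / (a ^ 2 * Real.cos t ^ 2 + (1 / a ^ 2) * Real.sin t ^ 2)) t := by
    intro t
    have hD : Real.cos t ^ 2 + 1 / a ^ 2 * Real.sin t ^ 2 ≠ 0 := by
      simpa using (hpos 1 _ one_pos hk t).ne'
    have hC := (hpos (a ^ 2) _ (by positivity) hk t).ne'
    have hs := Real.hasDerivAt_sin t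
    have hc := Real.hasDerivAt_cos t
    have h := (hasDerivAt_id t).add (((((hs.mul hc).const_mul (1 / a ^ 2 - 1)).div
      ((hc.pow 2).add ((hs.pow 2).const_mul (1 / a ^ 2))) hD)).arctan)
    refine h.congr_deriv ?_
    simp only [Pi.add_apply, Pi.mul_apply, Pi.div_apply, Pi.pow_apply]
    have hAk : a ^ 2 * (1 / a ^ 2) = 1 := by field_simp
    have hsc := Real.sin_sq_add_cos_sq t
    generalize 1 / a ^ 2 = k at *
    generalize a ^ 2 = A at *
    generalize Real.sin t = s at *
    generalize Real.cos t = c at *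
    -- The derivative of `arctan (N / D)` has denominator `D² + N²`, which is `k C`.
    have hsum : (c ^ 2 + k * s ^ 2) ^ 2 + ((k - 1) * (s * c)) ^ 2 =
        k * (A * c ^ 2 + k * s ^ 2) := by
      linear_combination (c ^ 2 + k ^ 2 * s ^ 2) * hsc - c ^ 2 * hAk
    have harctan : ∀ M : ℝ, 1 / (1 + ((k - 1) * (s * c) / (c ^ 2 + k * s ^ 2)) ^ 2) *
        (M / (c ^ 2 + k * s ^ 2) ^ 2) = M / (k * (A * c ^ 2 + k * s ^ 2)) := by
      intro M
      rw [← hsum, div_pow, one_add_div (pow_ne_zero 2 hD), one_div_div,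
        div_mul_div_comm, mul_comm (_ + _), mul_div_mul_left _ _ (pow_ne_zero 2 hD)]
    rw [harctan]
    have hk0 := hk.ne'
    rw [one_add_div (mul_ne_zero hk0 hC), div_eq_div_iff (mul_ne_zero hk0 hC) hC]
    have key : k * (A * c ^ 2 + k * s ^ 2) + (k - 1) * ((c ^ 2 - s ^ 2) * (c ^ 2 + k * s ^ 2)
        - (s * c) * (2 * (k - 1) * (s * c))) = k := by
      linear_combination c ^ 2 * hAk + ((k - 1) * (c ^ 2 - k * s ^ 2) + k) * hsc
    push_cast
    linear_combination (A * c ^ 2 + k * s ^ 2) * key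
  rw [intervalIntegral.integral_eq_sub_of_hasDerivAt (fun t _ => hderiv t)
    (hcont.intervalIntegrable _ _)]
  simp

/-- If `γ = (α_w C_v)/(α_v E_w)` is irrational, then for every
`s₀ > 0` the set of values `x_w(s₀ · e^{−nπ/g_v})`, as `n` ranges over the
natural numbers, is dense modulo `2π`; that is, its image in the circle
`ℝ/2πℤ` is dense. -/
theorem stmt_7 (a Cv Ev αv Cw Ew αw ε : ℝ)
    (ha : 0 < a) (hCv : 0 < Cv) (hEv : 0 < Ev) (hαv : 0 < αv)
    (hCw : 0 < Cw) (hEw : 0 < Ew) (hαw : 0 < αw) (hε : 0 < ε)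
    (δv gv δw gw γ c₁ c₂ c₃ : ℝ)
    (hδv : δv = Cv / Ev) (hgv : gv = αv / Ev)
    (hδw : δw = Cw / Ew) (hgw : gw = -(αw / Ew))
    (hγ : γ = (αw * Cv) / (αv * Ew))
    (hc₁ : c₁ = ε ^ (1 - δv)) (hc₂ : c₂ = gv * Real.log ε)
    (hc₃ : c₃ = gw * Real.log ε)
    (C Φ : ℝ → ℝ)
    (hC : ∀ φ : ℝ, C φ = a ^ 2 * Real.cos φ ^ 2 + (1 / a ^ 2) * Real.sin φ ^ 2)
    (hΦ : ∀ φ : ℝ, Φ φ = ∫ t in (0:ℝ)..φ, 1 / C t)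
    (φ xw : ℝ → ℝ)
    (hφ : ∀ s : ℝ, φ s = -gv * Real.log s + c₂)
    (hxw : ∀ s : ℝ, xw s = -gw * δv * Real.log s - (gw / 2) * Real.log (C (φ s))
        + Φ (φ s) + c₃ - gw * Real.log c₁)
    (hγirr : Irrational γ) :
    ∀ s₀ : ℝ, 0 < s₀ →
      Dense (Set.range fun n : ℕ =>
        ((xw (s₀ * Real.exp (-(n * Real.pi) / gv)) : ℝ) :
          AddCircle (2 * Real.pi))) := by
  intro s₀ hs₀
  have hgv0 : gv ≠ 0 := by rw [hgv]; positivity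
  have hsin : ∀ (x : ℝ) (n : ℕ), Real.sin (x + n * Real.pi) ^ 2 = Real.sin x ^ 2 := by
    intro x n
    rw [Real.sin_add_nat_mul_pi, mul_pow, ← pow_mul, mul_comm n, pow_mul]; simp
  have hcos : ∀ (x : ℝ) (n : ℕ), Real.cos (x + n * Real.pi) ^ 2 = Real.cos x ^ 2 := by
    intro x n
    rw [Real.cos_add_nat_mul_pi, mul_pow, ← pow_mul, mul_comm n, pow_mul]; simp
  have hsc : ∀ (x : ℝ) (n : ℕ), Real.sin (x + n * Real.pi) * Real.cos (x + n * Real.pi) =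
      Real.sin x * Real.cos x := by
    intro x n
    rw [Real.sin_add_nat_mul_pi, Real.cos_add_nat_mul_pi, mul_mul_mul_comm, ← mul_pow]; simp
  have hCper : ∀ (x : ℝ) (n : ℕ), C (x + n * Real.pi) = C x := by
    intro x n
    rw [hC, hC, hsin, hcos]
  have hΦper : ∀ (x : ℝ) (n : ℕ), Φ (x + n * Real.pi) = Φ x + n * Real.pi := by
    intro x n
    simp only [hΦ, hC, integral_one_div_quadratic ha, hsin, hcos, hsc]
    ring
  have hstep : ∀ n : ℕ, xw (s₀ * Real.exp (-(n * Real.pi) / gv)) =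
      xw s₀ + n * (Real.pi * (1 - γ)) := by
    intro n
    have hlog : Real.log (s₀ * Real.exp (-(n * Real.pi) / gv)) =
        Real.log s₀ - n * Real.pi / gv := by
      rw [Real.log_mul hs₀.ne' (Real.exp_ne_zero _), Real.log_exp]; ring
    have hφn : φ (s₀ * Real.exp (-(n * Real.pi) / gv)) = φ s₀ + n * Real.pi := by
      rw [hφ, hφ, hlog]; field_simp; ring
    have hrat : gw * δv / gv = -γ := by
      rw [hgw, hδv, hgv, hγ]; field_simp
    rw [hxw, hxw, hφn, hCper, hΦper, hlog]
    linear_combination n * Real.pi * hrat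
  have hirr : Irrational (Real.pi * (1 - γ) / (2 * Real.pi)) := by
    rw [mul_comm 2, mul_div_mul_left _ _ Real.pi_ne_zero]
    simpa using (hγirr.ratCast_sub 1).div_natCast (m := 2) two_ne_zero
  have : Fact (0 < 2 * Real.pi) := ⟨Real.two_pi_pos⟩
  have hdense : DenseRange
      (· • ((Real.pi * (1 - γ) : ℝ) : AddCircle (2 * Real.pi)) : ℕ → AddCircle (2 * Real.pi)) :=
    denseRange_zsmul_iff_nsmul.mp (AddCircle.denseRange_zsmul_coe_iff.mpr hirr)
  have htrans :=
    (Homeomorph.addLeft ((xw s₀ : ℝ) : AddCircle (2 * Real.pi))).surjective.denseRange.comp hdense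
      (Homeomorph.addLeft _).continuous
  refine (congrArg DenseRange (funext fun n => ?_)).mpr htrans
  simp [hstep]
end

section
/- The function x_w is differentiable on (0, ∞), and for every s > 0 its derivative satisfies x_w′(s) = −(1/s) · [ g_w δ_v + ( g_v g_w (a² − 1/a²) sin φ(s) cos φ(s) + g_v ) / C(φ(s)) ]. Consequently, x_w′(s) = 0 if and only if C_v · C(φ(s)) + α_v (a² − 1/a²) sin φ(s) cos φ(s) = α_v E_w / α_w. -/
/-!
The derivative formula is the chain rule together with the fundamental theorem of calculus:
`C > 0` everywhere, so `log ∘ C` is differentiable and `1 / C` is continuous, whence `Φ' = 1 / C`.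
With `C' = -2 (a² - 1/a²) sin cos` and `φ'(s) = -g_v / s` the terms combine to the stated
expression. Multiplying the bracket by `C(φ(s)) > 0` and inserting the definitions of `δ_v`, `g_v`,
`g_w` gives the criterion for a zero.
-/

/-- The function `x_w` is differentiable on `(0, ∞)`, and for every
`s > 0` its derivative satisfies
`x_w′(s) = −(1/s)·[ g_w δ_v + ( g_v g_w (a² − 1/a²) sin φ(s) cos φ(s) + g_v ) / C(φ(s)) ]`.
Consequently, `x_w′(s) = 0` if and only if
`C_v · C(φ(s)) + α_v (a² − 1/a²) sin φ(s) cos φ(s) = α_v E_w / α_w`. -/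
theorem stmt_8 (a Cv Ev αv Cw Ew αw ε : ℝ)
    (ha : 0 < a) (hCv : 0 < Cv) (hEv : 0 < Ev) (hαv : 0 < αv)
    (hCw : 0 < Cw) (hEw : 0 < Ew) (hαw : 0 < αw) (hε : 0 < ε)
    (δv gv δw gw c₁ c₂ c₃ : ℝ)
    (hδv : δv = Cv / Ev) (hgv : gv = αv / Ev)
    (hδw : δw = Cw / Ew) (hgw : gw = -(αw / Ew))
    (hc₁ : c₁ = ε ^ (1 - δv)) (hc₂ : c₂ = gv * Real.log ε)
    (hc₃ : c₃ = gw * Real.log ε)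
    (C Φ : ℝ → ℝ)
    (hC : ∀ φ : ℝ, C φ = a ^ 2 * Real.cos φ ^ 2 + (1 / a ^ 2) * Real.sin φ ^ 2)
    (hΦ : ∀ φ : ℝ, Φ φ = ∫ t in (0:ℝ)..φ, 1 / C t)
    (φ xw : ℝ → ℝ)
    (hφ : ∀ s : ℝ, φ s = -gv * Real.log s + c₂)
    (hxw : ∀ s : ℝ, xw s = -gw * δv * Real.log s - (gw / 2) * Real.log (C (φ s))
        + Φ (φ s) + c₃ - gw * Real.log c₁) :
    ∀ s : ℝ, 0 < s →
      HasDerivAt xw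
        (-(1 / s) * (gw * δv +
          (gv * gw * (a ^ 2 - 1 / a ^ 2) * Real.sin (φ s) * Real.cos (φ s) + gv)
            / C (φ s))) s ∧
      (deriv xw s = 0 ↔
        Cv * C (φ s) + αv * (a ^ 2 - 1 / a ^ 2) * Real.sin (φ s) * Real.cos (φ s)
          = αv * Ew / αw) := by
  have hCpos : ∀ t, 0 < C t := by
    intro t
    rw [hC]
    -- `sin` and `cos` do not vanish simultaneously
    rcases eq_or_ne (Real.cos t) 0 with h | h
    · have h1 : Real.sin t ^ 2 = 1 := by
        have := Real.sin_sq_add_cos_sq t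
        rw [h] at this
        linarith
      rw [h, h1]
      positivity
    · positivity
  have hCderiv : ∀ t, HasDerivAt C (-2 * (a ^ 2 - 1 / a ^ 2) * Real.sin t * Real.cos t) t := by
    intro t
    rw [funext hC]
    refine ((((Real.hasDerivAt_cos t).pow 2).const_mul (a ^ 2)).add
      (((Real.hasDerivAt_sin t).pow 2).const_mul (1 / a ^ 2))).congr_deriv ?_
    push_cast
    ring
  have hCcont : Continuous C :=
    continuous_iff_continuousAt.mpr fun t => (hCderiv t).continuousAt
  have hinv : Continuous fun t => 1 / C t :=
    continuous_const.div hCcont fun t => (hCpos t).ne'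
  have hΦderiv : ∀ t, HasDerivAt Φ (1 / C t) t := by
    intro t
    rw [funext hΦ]
    exact hinv.integral_hasStrictDerivAt 0 t |>.hasDerivAt
  intro s hs
  have hφderiv : HasDerivAt φ (-gv * s⁻¹) s := by
    rw [funext hφ]
    exact ((Real.hasDerivAt_log hs.ne').const_mul (-gv)).add_const c₂
  have hCs := hCpos (φ s)
  have key : HasDerivAt xw
      (-(1 / s) * (gw * δv +
        (gv * gw * (a ^ 2 - 1 / a ^ 2) * Real.sin (φ s) * Real.cos (φ s) + gv)
          / C (φ s))) s := by
    have hlogC := ((hCderiv (φ s)).comp s hφderiv).log hCs.ne'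
    have hΦφ := (hΦderiv (φ s)).comp s hφderiv
    rw [funext hxw]
    refine ((((((Real.hasDerivAt_log hs.ne').const_mul (-gw * δv)).sub
      (hlogC.const_mul (gw / 2))).add hΦφ).add_const c₃).sub_const (gw * Real.log c₁)).congr_deriv ?_
    simp only [Function.comp_apply]
    generalize a ^ 2 - 1 / a ^ 2 = A
    field_simp
    ring
  refine ⟨key, ?_⟩
  rw [key.deriv]
  generalize a ^ 2 - 1 / a ^ 2 = A
  have hfactor : -(1 / s) * (gw * δv +
      (gv * gw * A * Real.sin (φ s) * Real.cos (φ s) + gv) / C (φ s))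
      = αw / (s * Ew * Ev * C (φ s)) *
        (Cv * C (φ s) + αv * A * Real.sin (φ s) * Real.cos (φ s) - αv * Ew / αw) := by
    rw [hgw, hgv, hδv]
    field_simp
    ring
  have hne : αw / (s * Ew * Ev * C (φ s)) ≠ 0 := by positivity
  rw [hfactor, mul_eq_zero, or_iff_right hne, sub_eq_zero]
end

section
/- Let E_w, α_w be positive reals and S = √(C_v² + 4α_v²). The equation A(φ) = α_v E_w / α_w has a real solution φ if and only if (a² − 1/a²) · 2α_v/(C_v − S) ≤ E_w/α_w − a² C_v/α_v ≤ (a² − 1/a²) · 2α_v/(C_v + S). -/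
/-!
With `D = a² − 1/a² > 0` and the angle `β` given by `C_v = S cos β`, `2α_v = S sin β`, the double
angle formulas turn `A` into a single shifted cosine,
`A(φ) = C_v a² + (D/2)(S cos(2φ − β) − C_v)`.
Hence the range of `A` is the interval `C_v a² + (D/2)[−S − C_v, S − C_v]`. Dividing by `α_v` and using
`(S − C_v)(S + C_v) = 4α_v²` to rewrite the endpoints gives the stated bounds.
-/

/-- Phase-amplitude form: the amplitude `S` and one phase `β` for the vector `(p, q)`. -/
lemma exists_phase {p q S : ℝ} (hq : 0 ≤ q) (hS : 0 < S) (h : S ^ 2 = p ^ 2 + q ^ 2) :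
    ∃ β : ℝ, p = S * Real.cos β ∧ q = S * Real.sin β := by
  have hp : |p| ≤ S := abs_le_of_sq_le_sq (by nlinarith [sq_nonneg q]) hS.le
  have hcos : Real.cos (Real.arccos (p / S)) = p / S := by
    apply Real.cos_arccos
    · rw [le_div_iff₀ hS]; linarith [(abs_le.mp hp).1]
    · rw [div_le_iff₀ hS]; linarith [(abs_le.mp hp).2]
  have hpS : p = S * Real.cos (Real.arccos (p / S)) := by
    rw [hcos]; field_simp
  refine ⟨Real.arccos (p / S), hpS, ?_⟩
  have hsin : 0 ≤ Real.sin (Real.arccos (p / S)) :=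
    Real.sin_nonneg_of_nonneg_of_le_pi (Real.arccos_nonneg _) (Real.arccos_le_pi _)
  generalize Real.arccos (p / S) = β at *
  rw [← sq_eq_sq₀ hq (by positivity), mul_pow, Real.sin_sq]
  have : p ^ 2 = S ^ 2 * Real.cos β ^ 2 := by rw [← mul_pow, ← hpS]
  linarith

/-- Let `E_w, α_w` be positive reals and `S = √(C_v² + 4α_v²)`.
The equation `A(φ) = α_v E_w / α_w` has a real solution `φ` if and only if
`(a² − 1/a²)·2α_v/(C_v − S) ≤ E_w/α_w − a² C_v/α_v ≤ (a² − 1/a²)·2α_v/(C_v + S)`. -/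
theorem stmt_11 (a Cv αv Ew αw S : ℝ) (ha : 1 < a) (hCv : 0 < Cv) (hαv : 0 < αv)
    (hEw : 0 < Ew) (hαw : 0 < αw)
    (A : ℝ → ℝ)
    (hA : ∀ φ : ℝ, A φ = Cv * a ^ 2 * Real.cos φ ^ 2 + (Cv / a ^ 2) * Real.sin φ ^ 2
        + 2 * αv * (a ^ 2 - 1 / a ^ 2) * Real.sin φ * Real.cos φ)
    (hS : S = Real.sqrt (Cv ^ 2 + 4 * αv ^ 2)) :
    (∃ φ : ℝ, A φ = αv * Ew / αw) ↔
      ((a ^ 2 - 1 / a ^ 2) * (2 * αv / (Cv - S)) ≤ Ew / αw - a ^ 2 * Cv / αv ∧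
       Ew / αw - a ^ 2 * Cv / αv ≤ (a ^ 2 - 1 / a ^ 2) * (2 * αv / (Cv + S))) := by
  have hpos : 0 < Cv ^ 2 + 4 * αv ^ 2 := by positivity
  have hS2 : S ^ 2 = Cv ^ 2 + 4 * αv ^ 2 := by rw [hS, Real.sq_sqrt hpos.le]
  have hS0 : 0 < S := by rw [hS]; exact Real.sqrt_pos.mpr hpos
  have hCS : Cv < S := lt_of_pow_lt_pow_left₀ 2 hS0.le (by rw [hS2]; nlinarith [sq_pos_of_pos hαv])
  obtain ⟨β, hc, hs⟩ :=
    exists_phase (p := Cv) (q := 2 * αv) (S := S) (by positivity) hS0 (by rw [hS2]; ring)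
  obtain ⟨D, hD⟩ : ∃ D, D = a ^ 2 - 1 / a ^ 2 := ⟨_, rfl⟩
  have hD0 : 0 < D := by
    have h1 : 1 < a ^ 2 := by nlinarith
    have h2 : 1 / a ^ 2 < 1 := by rw [div_lt_one (by positivity)]; exact h1
    linarith
  have hform : ∀ φ, A φ = Cv * a ^ 2 + D / 2 * (S * Real.cos (2 * φ - β) - Cv) := by
    intro φ
    have hexp : S * Real.cos (2 * φ - β)
        = Cv * (1 - 2 * Real.sin φ ^ 2) + 2 * αv * (2 * Real.sin φ * Real.cos φ) := by
      rw [Real.cos_sub, Real.cos_two_mul, Real.sin_two_mul, Real.cos_sq', hc, hs]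
      ring
    have hdiv : Cv / a ^ 2 = Cv * (a ^ 2 - D) := by rw [hD]; ring
    rw [hA, hexp, ← hD, hdiv, Real.cos_sq']
    ring
  have hlow : D * (2 * αv / (Cv - S)) = D / (2 * αv) * (-S - Cv) := by
    have : Cv - S ≠ 0 := by linarith
    field_simp
    linear_combination -hS2
  have hupp : D * (2 * αv / (Cv + S)) = D / (2 * αv) * (S - Cv) := by
    have : Cv + S ≠ 0 := by positivity
    field_simp
    linear_combination -hS2
  -- `t` is the value the shifted cosine has to take.
  obtain ⟨t, ht⟩ : ∃ t, Ew / αw - a ^ 2 * Cv / αv = D / (2 * αv) * (S * t - Cv) := by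
    refine ⟨((Ew / αw - a ^ 2 * Cv / αv) / (D / (2 * αv)) + Cv) / S, ?_⟩
    field_simp
    ring
  have hEq : αv * Ew / αw = Cv * a ^ 2 + D / 2 * (S * t - Cv) := by
    have h : αv * (Ew / αw - a ^ 2 * Cv / αv) = αv * (D / (2 * αv) * (S * t - Cv)) := by rw [ht]
    have h1 : αv * (Ew / αw - a ^ 2 * Cv / αv) = αv * Ew / αw - a ^ 2 * Cv := by field_simp
    have h2 : αv * (D / (2 * αv) * (S * t - Cv)) = D / 2 * (S * t - Cv) := by field_simp
    linarith
  have hk : 0 < D / (2 * αv) := by positivity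
  have hsol : ∀ φ, A φ = αv * Ew / αw ↔ Real.cos (2 * φ - β) = t := by
    intro φ
    rw [hform, hEq, add_right_inj, mul_right_inj' (by positivity), sub_left_inj,
      mul_right_inj' hS0.ne']
  rw [← hD, hlow, hupp, ht, mul_le_mul_iff_right₀ hk, mul_le_mul_iff_right₀ hk]
  simp only [hsol]
  constructor
  · rintro ⟨φ, rfl⟩
    constructor
    · nlinarith [Real.neg_one_le_cos (2 * φ - β)]
    · nlinarith [Real.cos_le_one (2 * φ - β)]
  · rintro ⟨h1, h2⟩
    refine ⟨(Real.arccos t + β) / 2, ?_⟩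
    rw [show 2 * ((Real.arccos t + β) / 2) - β = Real.arccos t by ring]
    apply Real.cos_arccos
    · nlinarith
    · nlinarith
end

section
/- For every (x, y) with y > 0, the map η is differentiable at (x, y) and the determinant of its Jacobian equals δ_v δ_w · c₄ · c₁^{δ_w} · y^{δ_v δ_w − 1} · C(ψ(x,y))^{δ_w/2 − 1}. Consequently, if δ_v δ_w > 1 then det Dη(x, y) tends to 0 as y → 0⁺, uniformly in x. -/
/-!
Write `s = ψ(x, y)`, so that `∂ₓs = 1` and `∂ᵧs = -g_v / y`. Both components of `η` depend on
`x` only through `s`, hence the second column of the Jacobian is `∂ᵧs` times the first one plus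
the contribution of the explicit `y`-dependence. The multiple of the first column does not affect
the determinant, and in what is left the two terms containing `C'(s)` cancel; this is the
determinant formula. For the limit, `C` takes values in `[min (a²) (a⁻²), a² + a⁻²]`, so
`C ^ (δ_w / 2 - 1)` is bounded independently of `s`, while `y ^ (δ_v δ_w - 1) → 0`.
-/

lemma det_prod_functionals (u v w z : ℝ) :
    LinearMap.det (((u • ContinuousLinearMap.fst ℝ ℝ ℝ + v • ContinuousLinearMap.snd ℝ ℝ ℝ).prod
      (w • ContinuousLinearMap.fst ℝ ℝ ℝ + z • ContinuousLinearMap.snd ℝ ℝ ℝ) :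
        ℝ × ℝ →L[ℝ] ℝ × ℝ) : ℝ × ℝ →ₗ[ℝ] ℝ × ℝ) = u * z - v * w := by
  rw [← LinearMap.det_toMatrix (Module.Basis.finTwoProd ℝ), Matrix.det_fin_two]
  simp [LinearMap.toMatrix_apply]

lemma rpow_le_of_mem_Icc {m M c : ℝ} (p : ℝ) (hm : 0 < m) (h1 : m ≤ c) (h2 : c ≤ M) :
    c ^ p ≤ m ^ p + M ^ p := by
  have hc : 0 < c := hm.trans_le h1
  have hM : 0 < M := hc.trans_le h2
  rcases le_total 0 p with hp | hp
  · have := Real.rpow_le_rpow hc.le h2 hp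
    have := Real.rpow_pos_of_pos hm p
    linarith
  · have := Real.rpow_le_rpow_of_nonpos hm h1 hp
    have := Real.rpow_pos_of_pos hM p
    linarith

/-- The chain rule for `η` with an arbitrary positive differentiable `C`, an arbitrary
antiderivative `Φ` of `1 / C`, and arbitrary parameters. -/
lemma hasFDerivAt_and_det {C Φ C' : ℝ → ℝ} (hpos : ∀ t, 0 < C t)
    (hC : ∀ t, HasDerivAt C (C' t) t) (hΦ : ∀ t, HasDerivAt Φ (1 / C t) t)
    (gv gw δv δw A B K x y : ℝ) (hy : 0 < y) :
    ∃ D : ℝ × ℝ →L[ℝ] ℝ × ℝ,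
      HasFDerivAt (fun p : ℝ × ℝ =>
        (-gw * δv * Real.log p.2 - (gw / 2) * Real.log (C (p.1 - gv * Real.log p.2 + A))
            + Φ (p.1 - gv * Real.log p.2 + A) + B,
          K * p.2 ^ (δv * δw) * C (p.1 - gv * Real.log p.2 + A) ^ (δw / 2))) D (x, y) ∧
      LinearMap.det (D : ℝ × ℝ →ₗ[ℝ] ℝ × ℝ) =
        δv * δw * K * y ^ (δv * δw - 1) * C (x - gv * Real.log y + A) ^ (δw / 2 - 1) := by
  have hfst : HasFDerivAt (fun p : ℝ × ℝ => p.1) (ContinuousLinearMap.fst ℝ ℝ ℝ) (x, y) :=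
    hasFDerivAt_fst
  have hsnd : HasFDerivAt (fun p : ℝ × ℝ => p.2) (ContinuousLinearMap.snd ℝ ℝ ℝ) (x, y) :=
    hasFDerivAt_snd
  have hlog : HasFDerivAt (fun p : ℝ × ℝ => Real.log p.2)
      (y⁻¹ • ContinuousLinearMap.snd ℝ ℝ ℝ) (x, y) := hsnd.log hy.ne'
  have hpow : HasFDerivAt (fun p : ℝ × ℝ => p.2 ^ (δv * δw))
      ((δv * δw * y ^ (δv * δw - 1)) • ContinuousLinearMap.snd ℝ ℝ ℝ) (x, y) :=
    HasDerivAt.comp_hasFDerivAt (h₂ := fun t : ℝ => t ^ (δv * δw)) (x, y)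
      (Real.hasDerivAt_rpow_const (Or.inl hy.ne')) hsnd
  set s := x - gv * Real.log y + A with hs
  have hψ : HasFDerivAt (fun p : ℝ × ℝ => p.1 - gv * Real.log p.2 + A)
      (ContinuousLinearMap.fst ℝ ℝ ℝ - gv • (y⁻¹ • ContinuousLinearMap.snd ℝ ℝ ℝ)) (x, y) :=
    (hfst.sub (hlog.const_mul gv)).add_const A
  have hCψ : HasFDerivAt (fun p : ℝ × ℝ => C (p.1 - gv * Real.log p.2 + A))
      (C' s • (ContinuousLinearMap.fst ℝ ℝ ℝ - gv • (y⁻¹ • ContinuousLinearMap.snd ℝ ℝ ℝ)))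
      (x, y) := HasDerivAt.comp_hasFDerivAt (x, y) (hC s) hψ
  have hΦψ : HasFDerivAt (fun p : ℝ × ℝ => Φ (p.1 - gv * Real.log p.2 + A))
      ((1 / C s) • (ContinuousLinearMap.fst ℝ ℝ ℝ
        - gv • (y⁻¹ • ContinuousLinearMap.snd ℝ ℝ ℝ)))
      (x, y) := HasDerivAt.comp_hasFDerivAt (x, y) (hΦ s) hψ
  have hCpow := HasDerivAt.comp_hasFDerivAt (h₂ := fun t : ℝ => t ^ (δw / 2)) (x, y)
      (Real.hasDerivAt_rpow_const (Or.inl (hpos s).ne')) hCψ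
  have hX := ((((hlog.const_mul (-gw * δv)).sub
    ((hCψ.log (hpos s).ne').const_mul (gw / 2))).add hΦψ).add_const B)
  have hY := (hpow.const_mul K).mul hCpow
  have hc := (hpos s).ne'
  have e1 : C s ^ (δw / 2) = C s ^ (δw / 2 - 1) * C s := by
    rw [Real.rpow_sub_one hc]; field_simp
  have e2 : y ^ (δv * δw) = y ^ (δv * δw - 1) * y := by
    rw [Real.rpow_sub_one hy.ne']; field_simp
  -- `F` and `G` are the `x`-derivatives of the two components; the `y`-derivatives are
  -- `-gv / y` times these plus the explicit part.
  let F := -(gw / 2) * (C' s / C s) + 1 / C s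
  let G := K * y ^ (δv * δw) * (δw / 2 * C s ^ (δw / 2 - 1) * C' s)
  refine ⟨(F • ContinuousLinearMap.fst ℝ ℝ ℝ
      + (-gw * δv / y - F * gv / y) • ContinuousLinearMap.snd ℝ ℝ ℝ).prod
    (G • ContinuousLinearMap.fst ℝ ℝ ℝ
      + (K * (δv * δw * y ^ (δv * δw - 1)) * C s ^ (δw / 2) - G * gv / y) •
        ContinuousLinearMap.snd ℝ ℝ ℝ), ?_, ?_⟩
  · refine HasFDerivAt.prodMk (hX.congr_fderiv ?_) (hY.congr_fderiv ?_)
    · ext <;> simp [F, ← hs, -mul_eq_mul_left_iff] <;> ring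
    · ext <;> simp [G, ← hs] <;> ring
  · rw [det_prod_functionals]
    simp only [F, G, e1, e2]
    field_simp
    ring

/-- For every `(x, y)` with `y > 0`, the map `η` is differentiable
at `(x, y)` and the determinant of its Jacobian equals
`δ_v δ_w · c₄ · c₁^{δ_w} · y^{δ_v δ_w − 1} · C(ψ(x,y))^{δ_w/2 − 1}`.
Consequently, if `δ_v δ_w > 1` then `det Dη(x, y)` tends to `0` as `y → 0⁺`,
uniformly in `x`. -/
theorem stmt_13 (a Cv Ev αv Cw Ew αw ε : ℝ)
    (ha : 0 < a) (hCv : 0 < Cv) (hEv : 0 < Ev) (hαv : 0 < αv)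
    (hCw : 0 < Cw) (hEw : 0 < Ew) (hαw : 0 < αw) (hε : 0 < ε)
    (δv gv δw gw c₁ c₂ c₃ c₄ : ℝ)
    (hδv : δv = Cv / Ev) (hgv : gv = αv / Ev)
    (hδw : δw = Cw / Ew) (hgw : gw = -(αw / Ew))
    (hc₁ : c₁ = ε ^ (1 - δv)) (hc₂ : c₂ = gv * Real.log ε)
    (hc₃ : c₃ = gw * Real.log ε) (hc₄ : c₄ = ε ^ (1 - δw))
    (C Φ : ℝ → ℝ)
    (hC : ∀ φ : ℝ, C φ = a ^ 2 * Real.cos φ ^ 2 + (1 / a ^ 2) * Real.sin φ ^ 2)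
    (hΦ : ∀ φ : ℝ, Φ φ = ∫ t in (0:ℝ)..φ, 1 / C t)
    (ψ : ℝ × ℝ → ℝ)
    (hψ : ∀ p : ℝ × ℝ, ψ p = p.1 - gv * Real.log p.2 + c₂)
    (η : ℝ × ℝ → ℝ × ℝ)
    (hη : ∀ p : ℝ × ℝ, η p =
      (-gw * δv * Real.log p.2 - (gw / 2) * Real.log (C (ψ p)) + Φ (ψ p)
          + c₃ - gw * Real.log c₁,
       c₄ * c₁ ^ δw * p.2 ^ (δv * δw) * C (ψ p) ^ (δw / 2))) :
    (∀ x y : ℝ, 0 < y →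
      ∃ D : ℝ × ℝ →L[ℝ] ℝ × ℝ,
        HasFDerivAt η D (x, y) ∧
        LinearMap.det (D : ℝ × ℝ →ₗ[ℝ] ℝ × ℝ) =
          δv * δw * c₄ * c₁ ^ δw * y ^ (δv * δw - 1) *
            C (ψ (x, y)) ^ (δw / 2 - 1)) ∧
    (1 < δv * δw →
      ∀ ε' : ℝ, 0 < ε' → ∃ δ' : ℝ, 0 < δ' ∧
        ∀ x y : ℝ, 0 < y → y < δ' →
          ∀ D : ℝ × ℝ →L[ℝ] ℝ × ℝ, HasFDerivAt η D (x, y) →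
            |LinearMap.det (D : ℝ × ℝ →ₗ[ℝ] ℝ × ℝ)| < ε') := by
  have ha2 : 0 < a ^ 2 := by positivity
  have hb2 : 0 < 1 / a ^ 2 := by positivity
  have hm : 0 < min (a ^ 2) (1 / a ^ 2) := lt_min ha2 hb2
  have hlow : ∀ t, min (a ^ 2) (1 / a ^ 2) ≤ C t := fun t => by
    rw [hC]
    have h1 := mul_le_mul_of_nonneg_right (min_le_left (a ^ 2) (1 / a ^ 2))
      (sq_nonneg (Real.cos t))
    have h2 := mul_le_mul_of_nonneg_right (min_le_right (a ^ 2) (1 / a ^ 2))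
      (sq_nonneg (Real.sin t))
    have h3 : min (a ^ 2) (1 / a ^ 2) * Real.cos t ^ 2 + min (a ^ 2) (1 / a ^ 2) * Real.sin t ^ 2
        = min (a ^ 2) (1 / a ^ 2) := by
      rw [← mul_add, Real.cos_sq_add_sin_sq, mul_one]
    linarith
  have hup : ∀ t, C t ≤ a ^ 2 + 1 / a ^ 2 := fun t => by
    rw [hC]
    have h1 := mul_le_of_le_one_right ha2.le (Real.cos_sq_le_one t)
    have h2 := mul_le_of_le_one_right hb2.le (Real.sin_sq_le_one t)
    linarith
  have hpos : ∀ t, 0 < C t := fun t => hm.trans_le (hlow t)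
  have hCd : ∀ t, HasDerivAt C (a ^ 2 * (2 * Real.cos t * -Real.sin t)
      + 1 / a ^ 2 * (2 * Real.sin t * Real.cos t)) t := fun t => by
    have h := (((Real.hasDerivAt_cos t).pow 2).const_mul (a ^ 2)).add
      (((Real.hasDerivAt_sin t).pow 2).const_mul (1 / a ^ 2))
    rw [show C = _ from funext hC]
    exact h.congr_deriv (by simp)
  have hCc : Continuous fun t => 1 / C t :=
    continuous_const.div (continuous_iff_continuousAt.2 fun t => (hCd t).continuousAt)
      fun t => (hpos t).ne'
  have hΦd : ∀ t, HasDerivAt Φ (1 / C t) t := fun t => by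
    rw [show Φ = _ from funext hΦ]
    exact hCc.integral_hasStrictDerivAt 0 t |>.hasDerivAt
  have main : ∀ x y : ℝ, 0 < y →
      ∃ D : ℝ × ℝ →L[ℝ] ℝ × ℝ,
        HasFDerivAt η D (x, y) ∧
        LinearMap.det (D : ℝ × ℝ →ₗ[ℝ] ℝ × ℝ) =
          δv * δw * c₄ * c₁ ^ δw * y ^ (δv * δw - 1) *
            C (ψ (x, y)) ^ (δw / 2 - 1) := by
    intro x y hy
    obtain ⟨D, hD, hdet⟩ := hasFDerivAt_and_det hpos hCd hΦd gv gw δv δw c₂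
      (c₃ - gw * Real.log c₁) (c₄ * c₁ ^ δw) x y hy
    refine ⟨D, ?_, ?_⟩
    · convert hD using 1
      funext p
      rw [hη, hψ, add_sub_assoc]
    · rw [hdet, hψ]
      ring
  refine ⟨main, fun h1 ε' hε' => ?_⟩
  set B := (min (a ^ 2) (1 / a ^ 2)) ^ (δw / 2 - 1) + (a ^ 2 + 1 / a ^ 2) ^ (δw / 2 - 1) with hB
  have hK : 0 ≤ δv * δw * c₄ * c₁ ^ δw := by
    have : 0 < c₁ := hc₁ ▸ Real.rpow_pos_of_pos hε _
    have : 0 < c₄ := hc₄ ▸ Real.rpow_pos_of_pos hε _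
    have : 0 < δv * δw := by linarith
    positivity
  have hlim : Filter.Tendsto (fun y : ℝ => δv * δw * c₄ * c₁ ^ δw * y ^ (δv * δw - 1) * B)
      (nhds 0) (nhds 0) := by
    have hp : 0 < δv * δw - 1 := by linarith
    have h := ((Real.continuousAt_rpow_const 0 _ (Or.inr hp.le)).tendsto.const_mul
      (δv * δw * c₄ * c₁ ^ δw)).mul_const B
    simpa [Real.zero_rpow hp.ne'] using h
  obtain ⟨δ', hδ', hlt⟩ := Metric.eventually_nhds_iff.1 (hlim.eventually_lt_const hε')
  refine ⟨δ', hδ', fun x y hy hyδ D hD => ?_⟩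
  obtain ⟨D', hD', hdet⟩ := main x y hy
  rw [hD.unique hD', hdet]
  have hKy : 0 ≤ δv * δw * c₄ * c₁ ^ δw * y ^ (δv * δw - 1) :=
    mul_nonneg hK (Real.rpow_nonneg hy.le _)
  rw [abs_of_nonneg (mul_nonneg hKy (Real.rpow_nonneg (hpos _).le _))]
  refine (mul_le_mul_of_nonneg_left
    (rpow_le_of_mem_Icc (δw / 2 - 1) hm (hlow _) (hup _)) hKy).trans_lt (hlt ?_)
  rwa [Real.dist_eq, sub_zero, abs_of_pos hy]
end

section
/- For all real parameters α₁, α₂, λ and every X ∈ ℝ⁴, the Euclidean inner product of X with f_λ(X) satisfies ⟨X, f_λ(X)⟩ = ‖X‖²(1 − ‖X‖²). In particular ⟨X, f_λ(X)⟩ = 0 whenever ‖X‖ = 1, ⟨X, f_λ(X)⟩ > 0 whenever 0 < ‖X‖ < 1, and ⟨X, f_λ(X)⟩ < 0 whenever ‖X‖ > 1. -/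
open RealInnerProductSpace

/-- For all real parameters `α₁, α₂, λ` and every `X ∈ ℝ⁴`, the
Euclidean inner product of `X` with `f_λ(X)` satisfies
`⟨X, f_λ(X)⟩ = ‖X‖²(1 − ‖X‖²)`. In particular `⟨X, f_λ(X)⟩ = 0` whenever
`‖X‖ = 1`, `⟨X, f_λ(X)⟩ > 0` whenever `0 < ‖X‖ < 1`, and `⟨X, f_λ(X)⟩ < 0`
whenever `‖X‖ > 1`. -/
theorem stmt_14 (α₁ α₂ lam : ℝ)
    (f : EuclideanSpace ℝ (Fin 4) → EuclideanSpace ℝ (Fin 4))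
    (hf : ∀ X : EuclideanSpace ℝ (Fin 4),
      f X 0 = X 0 * (1 - (X 0 ^ 2 + X 1 ^ 2 + X 2 ^ 2 + X 3 ^ 2))
          - X 3 * X 1 - α₁ * X 0 * X 3 + α₂ * X 0 * X 3 ^ 2 ∧
      f X 1 = X 1 * (1 - (X 0 ^ 2 + X 1 ^ 2 + X 2 ^ 2 + X 3 ^ 2))
          + X 3 * X 0 - α₁ * X 1 * X 3 + α₂ * X 1 * X 3 ^ 2 ∧
      f X 2 = X 2 * (1 - (X 0 ^ 2 + X 1 ^ 2 + X 2 ^ 2 + X 3 ^ 2))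
          + α₁ * X 2 * X 3 + α₂ * X 2 * X 3 ^ 2 + lam * X 0 * X 1 * X 3 ∧
      f X 3 = X 3 * (1 - (X 0 ^ 2 + X 1 ^ 2 + X 2 ^ 2 + X 3 ^ 2))
          - α₁ * (X 2 ^ 2 - X 0 ^ 2 - X 1 ^ 2)
          - α₂ * X 3 * (X 0 ^ 2 + X 1 ^ 2 + X 2 ^ 2) - lam * X 0 * X 1 * X 2) :
    ∀ X : EuclideanSpace ℝ (Fin 4),
      ⟪X, f X⟫ = ‖X‖ ^ 2 * (1 - ‖X‖ ^ 2) ∧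
      (‖X‖ = 1 → ⟪X, f X⟫ = 0) ∧
      (0 < ‖X‖ → ‖X‖ < 1 → 0 < ⟪X, f X⟫) ∧
      (1 < ‖X‖ → ⟪X, f X⟫ < 0) := by
  intro X
  obtain ⟨h0, h1, h2, h3⟩ := hf X
  -- The `α₁`, `α₂`, `lam` and rotation terms of `f` are tangent to the spheres `‖X‖ = const`,
  -- so they cancel in the inner product and only the radial part `X * (1 - ‖X‖ ^ 2)` remains.
  have key : ⟪X, f X⟫ = ‖X‖ ^ 2 * (1 - ‖X‖ ^ 2) := by
    rw [EuclideanSpace.real_norm_sq_eq, PiLp.inner_apply]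
    simp only [Fin.sum_univ_four, RCLike.inner_apply, conj_trivial, h0, h1, h2, h3]
    ring
  refine ⟨key, fun h => ?_, fun hpos hlt => ?_, fun hgt => ?_⟩
  · rw [key, h]
    norm_num
  · rw [key]
    exact mul_pos (by positivity) (by nlinarith)
  · rw [key]
    exact mul_neg_of_pos_of_neg (by positivity) (by nlinarith)
end

section
/- For all real parameters α₁, α₂, λ and for each ε ∈ {1, −1}: the point (0,0,0,ε) is an equilibrium, i.e. f_λ(0,0,0,ε) = 0, and the Jacobian matrix of f_λ at (0,0,0,ε) has characteristic polynomial (t + 2) · (t − (α₂ + εα₁)) · ( (t − (α₂ − εα₁))² + 1 ); equivalently, its complex eigenvalues are α₂ − εα₁ ± i, α₂ + εα₁ and −2. -/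
/-!
The restriction of `f` to a line `t ↦ (0,0,0,ε) + t v` has derivative `J v` at `t = 0`.
Differentiating the four component polynomials along this line and using `ε² = 1` gives
`J v = ((α₂ - εα₁) v₀ - ε v₁, ε v₀ + (α₂ - εα₁) v₁, (α₂ + εα₁) v₂, -2 v₃)`,
so `J` is block diagonal with a `2 × 2` rotation-scaling block and two `1 × 1` blocks, and the
characteristic polynomial factors accordingly. The parameter `λ` enters only through terms that
vanish to second order at the equilibrium.
-/

/-- The characteristic polynomial of the block diagonal matrix with blocks
`(a, -e; e, a)`, `(b)` and `(-2)`, where `e = ±1`. -/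
lemma charpoly_block (a b e : ℝ) (he : e ^ 2 = 1) :
    Matrix.charpoly !![a, -e, 0, 0; e, a, 0, 0; 0, 0, b, 0; 0, 0, 0, -2] =
      (Polynomial.X + 2) * (Polynomial.X - Polynomial.C b) *
        ((Polynomial.X - Polynomial.C a) ^ 2 + 1) := by
  have hC : (Polynomial.C e) ^ 2 = 1 := by
    rw [← Polynomial.C_pow, he, Polynomial.C_1]
  have h2 : Polynomial.C (2 : ℝ) = 2 := rfl
  rw [Matrix.charpoly, Matrix.det_succ_row_zero]
  simp [Fin.sum_univ_succ, Matrix.det_fin_three, Matrix.charmatrix_apply, Matrix.submatrix_apply,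
    Fin.succAbove, Matrix.diagonal_apply, h2]
  linear_combination ((Polynomial.X + 2) * (Polynomial.X - Polynomial.C b)) * hC

/-- For all real parameters `α₁, α₂, λ` and each `ε ∈ {1, −1}`:
the point `(0,0,0,ε)` is an equilibrium, i.e. `f_λ(0,0,0,ε) = 0`, and the
Jacobian matrix of `f_λ` at `(0,0,0,ε)` (the matrix of the Fréchet derivative
there) has characteristic polynomial
`(t + 2)·(t − (α₂ + εα₁))·((t − (α₂ − εα₁))² + 1)`. -/
theorem stmt_15 (α₁ α₂ lam : ℝ)
    (f : (Fin 4 → ℝ) → (Fin 4 → ℝ))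
    (hf : ∀ X : Fin 4 → ℝ, f X =
      ![X 0 * (1 - (X 0 ^ 2 + X 1 ^ 2 + X 2 ^ 2 + X 3 ^ 2))
          - X 3 * X 1 - α₁ * X 0 * X 3 + α₂ * X 0 * X 3 ^ 2,
        X 1 * (1 - (X 0 ^ 2 + X 1 ^ 2 + X 2 ^ 2 + X 3 ^ 2))
          + X 3 * X 0 - α₁ * X 1 * X 3 + α₂ * X 1 * X 3 ^ 2,
        X 2 * (1 - (X 0 ^ 2 + X 1 ^ 2 + X 2 ^ 2 + X 3 ^ 2))
          + α₁ * X 2 * X 3 + α₂ * X 2 * X 3 ^ 2 + lam * X 0 * X 1 * X 3,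
        X 3 * (1 - (X 0 ^ 2 + X 1 ^ 2 + X 2 ^ 2 + X 3 ^ 2))
          - α₁ * (X 2 ^ 2 - X 0 ^ 2 - X 1 ^ 2)
          - α₂ * X 3 * (X 0 ^ 2 + X 1 ^ 2 + X 2 ^ 2) - lam * X 0 * X 1 * X 2])
    (e : ℝ) (he : e = 1 ∨ e = -1)
    (J : Matrix (Fin 4) (Fin 4) ℝ)
    (hJ : HasFDerivAt f
      (LinearMap.toContinuousLinearMap (Matrix.mulVecLin J)) ![0, 0, 0, e]) :
    f ![0, 0, 0, e] = 0 ∧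
    Matrix.charpoly J =
      (Polynomial.X + 2) * (Polynomial.X - Polynomial.C (α₂ + e * α₁)) *
        ((Polynomial.X - Polynomial.C (α₂ - e * α₁)) ^ 2 + 1) := by
  have he2 : e ^ 2 = 1 := by rcases he with rfl | rfl <;> norm_num
  refine ⟨?_, ?_⟩
  · rw [hf]
    ext i
    fin_cases i <;> simp [he2]
  -- the directional derivative of each component along `v`
  have hc : ∀ (v : Fin 4 → ℝ) (i : Fin 4),
      HasDerivAt (fun t : ℝ => f (![0, 0, 0, e] + t • v) i) ((J.mulVec v) i) 0 := by
    intro v i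
    have hl : HasDerivAt (fun t : ℝ => ![0, 0, 0, e] + t • v) v 0 := by
      simpa using ((hasDerivAt_id (0 : ℝ)).smul_const v).const_add ![0, 0, 0, e]
    have hJ' : HasFDerivAt f (LinearMap.toContinuousLinearMap (Matrix.mulVecLin J))
        (![0, 0, 0, e] + (0 : ℝ) • v) := by simpa using hJ
    have := hJ'.comp_hasDerivAt (0 : ℝ) hl
    exact (hasDerivAt_pi.1 this) i
  -- a cubic polynomial in `t` has its linear coefficient as derivative at `0`
  have hpoly : ∀ (g : ℝ → ℝ) (d a b c : ℝ), HasDerivAt g d 0 →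
      (∀ t, g t = a * t + b * t ^ 2 + c * t ^ 3) → d = a := by
    intro g d a b c hg h
    have h1 : HasDerivAt g a 0 := by
      rw [funext h]
      have := (((hasDerivAt_id (0 : ℝ)).const_mul a).add
        ((hasDerivAt_pow 2 (0 : ℝ)).const_mul b)).add ((hasDerivAt_pow 3 (0 : ℝ)).const_mul c)
      simpa [Pi.add_def] using this
    exact hg.unique h1
  have r0 : ∀ v, J.mulVec v 0 = (α₂ - e * α₁) * v 0 - e * v 1 := by
    intro v
    refine hpoly _ _ _ (-2 * e * v 0 * v 3 - v 3 * v 1 - α₁ * v 0 * v 3 + 2 * α₂ * e * v 0 * v 3)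
      (-v 0 * (v 0 ^ 2 + v 1 ^ 2 + v 2 ^ 2 + v 3 ^ 2) + α₂ * v 0 * v 3 ^ 2) (hc v 0) fun t => ?_
    simp [hf, -Matrix.cons_add]
    linear_combination (-t * v 0 + α₂ * t * v 0) * he2
  have r1 : ∀ v, J.mulVec v 1 = e * v 0 + (α₂ - e * α₁) * v 1 := by
    intro v
    refine hpoly _ _ _ (-2 * e * v 1 * v 3 + v 3 * v 0 - α₁ * v 1 * v 3 + 2 * α₂ * e * v 1 * v 3)
      (-v 1 * (v 0 ^ 2 + v 1 ^ 2 + v 2 ^ 2 + v 3 ^ 2) + α₂ * v 1 * v 3 ^ 2) (hc v 1) fun t => ?_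
    simp [hf, -Matrix.cons_add]
    linear_combination (-t * v 1 + α₂ * t * v 1) * he2
  have r2 : ∀ v, J.mulVec v 2 = (α₂ + e * α₁) * v 2 := by
    intro v
    refine hpoly _ _ _ (-2 * e * v 2 * v 3 + α₁ * v 2 * v 3 + 2 * α₂ * e * v 2 * v 3
        + lam * e * v 0 * v 1)
      (-v 2 * (v 0 ^ 2 + v 1 ^ 2 + v 2 ^ 2 + v 3 ^ 2) + α₂ * v 2 * v 3 ^ 2
        + lam * v 0 * v 1 * v 3) (hc v 2) fun t => ?_
    simp [hf, -Matrix.cons_add]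
    linear_combination (-t * v 2 + α₂ * t * v 2) * he2
  have r3 : ∀ v, J.mulVec v 3 = -2 * v 3 := by
    intro v
    refine hpoly _ _ _ (-2 * e * v 3 ^ 2 - e * (v 0 ^ 2 + v 1 ^ 2 + v 2 ^ 2 + v 3 ^ 2)
        - α₁ * (v 2 ^ 2 - v 0 ^ 2 - v 1 ^ 2) - α₂ * e * (v 0 ^ 2 + v 1 ^ 2 + v 2 ^ 2))
      (-v 3 * (v 0 ^ 2 + v 1 ^ 2 + v 2 ^ 2 + v 3 ^ 2) - α₂ * v 3 * (v 0 ^ 2 + v 1 ^ 2 + v 2 ^ 2)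
        - lam * v 0 * v 1 * v 2) (hc v 3) fun t => ?_
    simp [hf, -Matrix.cons_add]
    linear_combination (-e - 3 * t * v 3) * he2
  have hJeq : J = !![α₂ - e * α₁, -e, 0, 0; e, α₂ - e * α₁, 0, 0;
      0, 0, α₂ + e * α₁, 0; 0, 0, 0, -2] := by
    ext i j
    -- the entry `J i j` is the `i`-th coordinate of `J` applied to the `j`-th basis vector
    have hij : J i j = J.mulVec (Pi.single j 1) i := by simp
    rw [hij]
    fin_cases i
    · refine (r0 _).trans ?_
      fin_cases j <;> simp
    · refine (r1 _).trans ?_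
      fin_cases j <;> simp
    · refine (r2 _).trans ?_
      fin_cases j <;> simp
    · refine (r3 _).trans ?_
      fin_cases j <;> simp
  rw [hJeq]
  exact charpoly_block _ _ _ he2
end

section
/- For all real parameters α₁, α₂, λ: the vector field f_λ is equivariant under the reflection κ̃₂(x₁,x₂,x₃,x₄) = (x₁,x₂,−x₃,x₄) — i.e. f_λ(κ̃₂(X)) = κ̃₂(f_λ(X)) for every X ∈ ℝ⁴ — if and only if λ = 0. In particular, for λ = 0 the hyperplane {x₃ = 0} is invariant (the third component of f₀(X) vanishes whenever x₃ = 0), while for λ ≠ 0 there exists X with x₃ = 0 whose image under f_λ has nonzero third component. -/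
/-- For all real parameters `α₁, α₂, λ`: the vector field `f_λ` is
equivariant under the reflection `κ̃₂(x₁,x₂,x₃,x₄) = (x₁,x₂,−x₃,x₄)` — i.e.
`f_λ(κ̃₂(X)) = κ̃₂(f_λ(X))` for every `X ∈ ℝ⁴` — if and only if `λ = 0`.
In particular, for `λ = 0` the hyperplane `{x₃ = 0}` is invariant (the third
component of `f₀(X)` vanishes whenever `x₃ = 0`), while for `λ ≠ 0` there exists
`X` with `x₃ = 0` whose image under `f_λ` has nonzero third component. -/
theorem stmt_18 (α₁ α₂ lam : ℝ)
    (f : ℝ × ℝ × ℝ × ℝ → ℝ × ℝ × ℝ × ℝ)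
    (hf : ∀ x₁ x₂ x₃ x₄ : ℝ, f (x₁, x₂, x₃, x₄) =
      (x₁ * (1 - (x₁ ^ 2 + x₂ ^ 2 + x₃ ^ 2 + x₄ ^ 2))
          - x₄ * x₂ - α₁ * x₁ * x₄ + α₂ * x₁ * x₄ ^ 2,
       x₂ * (1 - (x₁ ^ 2 + x₂ ^ 2 + x₃ ^ 2 + x₄ ^ 2))
          + x₄ * x₁ - α₁ * x₂ * x₄ + α₂ * x₂ * x₄ ^ 2,
       x₃ * (1 - (x₁ ^ 2 + x₂ ^ 2 + x₃ ^ 2 + x₄ ^ 2))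
          + α₁ * x₃ * x₄ + α₂ * x₃ * x₄ ^ 2 + lam * x₁ * x₂ * x₄,
       x₄ * (1 - (x₁ ^ 2 + x₂ ^ 2 + x₃ ^ 2 + x₄ ^ 2))
          - α₁ * (x₃ ^ 2 - x₁ ^ 2 - x₂ ^ 2)
          - α₂ * x₄ * (x₁ ^ 2 + x₂ ^ 2 + x₃ ^ 2) - lam * x₁ * x₂ * x₃))
    (κ : ℝ × ℝ × ℝ × ℝ → ℝ × ℝ × ℝ × ℝ)
    (hκ : ∀ x₁ x₂ x₃ x₄ : ℝ, κ (x₁, x₂, x₃, x₄) = (x₁, x₂, -x₃, x₄)) :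
    ((∀ X : ℝ × ℝ × ℝ × ℝ, f (κ X) = κ (f X)) ↔ lam = 0) ∧
    (lam = 0 → ∀ X : ℝ × ℝ × ℝ × ℝ, X.2.2.1 = 0 → (f X).2.2.1 = 0) ∧
    (lam ≠ 0 → ∃ X : ℝ × ℝ × ℝ × ℝ, X.2.2.1 = 0 ∧ (f X).2.2.1 ≠ 0) := by
  refine ⟨⟨fun h => ?_, ?_⟩, ?_, fun h => ⟨(1, 1, 0, 1), rfl, ?_⟩⟩
  · -- At `(1, 1, 0, 1)`, a fixed point of `κ`, the third component of `f` is `lam`,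
    -- so equivariance there reads `lam = -lam`.
    have h₃ := congrArg (fun Y => Y.2.2.1) (h (1, 1, 0, 1))
    simp only [hκ, hf] at h₃
    linarith
  · rintro rfl ⟨x₁, x₂, x₃, x₄⟩
    simp only [hκ, hf, Prod.mk.injEq]
    refine ⟨?_, ?_, ?_, ?_⟩ <;> ring
  · rintro rfl ⟨x₁, x₂, x₃, x₄⟩ hx
    obtain rfl : x₃ = 0 := hx
    simp [hf]
  · simpa [hf] using h
end
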